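/- arXiv:1504.04723 — 13 statements merged into one kernel-verified Lean document; each statement's English description precedes it below -/
import Mathlib

section
/- Let ν₁ > 0, ν₂ > 0, h > 0 and set σ = ν₂/ν₁, b = 1/ν₁, a = −ν₂²/h², r = h²/(ν₁ν₂). If X, Y, Z : ℝ → ℝ are differentiable functions satisfying the generalized Lorenz system X' = −σ(X − Y) − a·Y·Z, Y' = r·X − Y − X·Z, Z' = −b·Z + X·Y, then the functions x(t) = ν₁ν₂h⁻¹·Y(ν₁t), y(t) = ν₁·X(ν₁t), z(t) = ν₁ν₂h⁻¹·Z(ν₁t) satisfy the Rabinovich system x' = h·y − ν₁·x − y·z, y' = h·x − ν₂·y + x·z, z' = −z + x·y. -/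
/-- the linear transformation carries solutions of the generalized
Lorenz system to solutions of the Rabinovich system. -/
theorem rabinovich_from_generalized_lorenz
    (ν₁ ν₂ h : ℝ) (hν₁ : 0 < ν₁) (hν₂ : 0 < ν₂) (hh : 0 < h)
    (σ a b r : ℝ)
    (hσ : σ = ν₂ / ν₁) (hb : b = 1 / ν₁) (ha : a = -ν₂ ^ 2 / h ^ 2)
    (hr : r = h ^ 2 / (ν₁ * ν₂))
    (X Y Z : ℝ → ℝ)
    (hX : Differentiable ℝ X) (hY : Differentiable ℝ Y) (hZ : Differentiable ℝ Z)
    (hX' : ∀ t, deriv X t = -σ * (X t - Y t) - a * Y t * Z t)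
    (hY' : ∀ t, deriv Y t = r * X t - Y t - X t * Z t)
    (hZ' : ∀ t, deriv Z t = -b * Z t + X t * Y t)
    (x y z : ℝ → ℝ)
    (hx : x = fun t => ν₁ * ν₂ * h⁻¹ * Y (ν₁ * t))
    (hy : y = fun t => ν₁ * X (ν₁ * t))
    (hz : z = fun t => ν₁ * ν₂ * h⁻¹ * Z (ν₁ * t)) :
    (∀ t, deriv x t = h * y t - ν₁ * x t - y t * z t) ∧
    (∀ t, deriv y t = h * x t - ν₂ * y t + x t * z t) ∧
    (∀ t, deriv z t = -z t + x t * y t) := by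
  have key : ∀ (c : ℝ) (F : ℝ → ℝ), Differentiable ℝ F → ∀ t,
      deriv (fun t => c * F (ν₁ * t)) t = c * (deriv F (ν₁ * t) * ν₁) := by
    intro c F hF t
    have h1 : HasDerivAt (fun t : ℝ => ν₁ * t) ν₁ t := by
      simpa using (hasDerivAt_id t).const_mul ν₁
    have h2 : HasDerivAt (fun t => F (ν₁ * t)) (deriv F (ν₁ * t) * ν₁) t :=
      HasDerivAt.comp t (hF (ν₁ * t)).hasDerivAt h1
    exact (h2.const_mul c).deriv
  have n1 := hν₁.ne'
  have n2 := hν₂.ne'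
  have n3 := hh.ne'
  subst hx hy hz hσ hb ha hr
  refine ⟨fun t => ?_, fun t => ?_, fun t => ?_⟩
  · rw [key _ _ hY, hY']
    field_simp
  · rw [key _ _ hX, hX']
    field_simp
    ring
  · rw [key _ _ hZ, hZ']
    field_simp
end

section
/- Let a < 0, b > 0, 0 < r < 1 and σ = −a·r. Then the only solution (x, y, z) ∈ ℝ³ of the system of equations −σ(x − y) − a·y·z = 0, r·x − y − x·z = 0, −b·z + x·y = 0 is (x, y, z) = (0, 0, 0). -/
/-- for 0 < r < 1 the origin is the unique equilibrium. -/
theorem unique_equilibrium_of_r_lt_one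
    (a b r σ : ℝ) (ha : a < 0) (hb : 0 < b) (hr0 : 0 < r) (hr1 : r < 1)
    (hσ : σ = -a * r) (x y z : ℝ)
    (h1 : -σ * (x - y) - a * y * z = 0)
    (h2 : r * x - y - x * z = 0)
    (h3 : -b * z + x * y = 0) :
    x = 0 ∧ y = 0 ∧ z = 0 := by
  subst hσ
  have h4 : a * (r * (x - y) - y * z) = 0 := by linarith
  have h5 : r * (x - y) - y * z = 0 := (mul_eq_zero.mp h4).resolve_left ha.ne
  have hy : y = x * (r - z) := by linarith
  have h6 : x * (r * (1 - r) + z ^ 2) = 0 := by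
    rw [hy] at h5
    linarith
  have h7 : 0 < r * (1 - r) := mul_pos hr0 (by linarith)
  have hx : x = 0 := (mul_eq_zero.mp h6).resolve_right (by positivity)
  have hy0 : y = 0 := by rw [hy, hx, zero_mul]
  have hz : b * z = 0 := by
    rw [hx] at h3
    linarith
  exact ⟨hx, hy0, (mul_eq_zero.mp hz).resolve_left hb.ne'⟩
end

section
/- Let a < 0, b > 0, r > 1, σ = −a·r, ξ = (σ·b/(2·a²))·(a·(r − 2) − σ + √((σ − a·r)² + 4·a·σ)), x₁ = σ·b·√ξ/(σ·b + a·ξ), y₁ = √ξ, z₁ = σ·ξ/(σ·b + a·ξ). Then the points S₊ = (x₁, y₁, z₁) and S₋ = (−x₁, −y₁, z₁) are equilibria of the generalized Lorenz system, i.e. they satisfy −σ(x − y) − a·y·z = 0, r·x − y − x·z = 0, −b·z + x·y = 0. -/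
/-- S₊ and S₋ are equilibria of the generalized Lorenz system. -/
theorem S_pm_are_equilibria
    (a b r σ ξ x₁ y₁ z₁ : ℝ) (ha : a < 0) (hb : 0 < b) (hr : 1 < r) (hσ : σ = -a * r)
    (hξ : ξ = (σ * b / (2 * a ^ 2)) *
      (a * (r - 2) - σ + Real.sqrt ((σ - a * r) ^ 2 + 4 * a * σ)))
    (hx₁ : x₁ = σ * b * Real.sqrt ξ / (σ * b + a * ξ))
    (hy₁ : y₁ = Real.sqrt ξ)
    (hz₁ : z₁ = σ * ξ / (σ * b + a * ξ)) :
    (-σ * (x₁ - y₁) - a * y₁ * z₁ = 0 ∧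
      r * x₁ - y₁ - x₁ * z₁ = 0 ∧
      -b * z₁ + x₁ * y₁ = 0) ∧
    (-σ * (-x₁ - -y₁) - a * -y₁ * z₁ = 0 ∧
      r * -x₁ - -y₁ - -x₁ * z₁ = 0 ∧
      -b * z₁ + -x₁ * -y₁ = 0) := by
  obtain ⟨s, hs⟩ : ∃ s, s = Real.sqrt (r * (r - 1)) := ⟨_, rfl⟩
  have hs0 : 0 ≤ s := hs ▸ Real.sqrt_nonneg _
  have hs2 : s ^ 2 = r * (r - 1) := by
    rw [hs]; exact Real.sq_sqrt (by nlinarith)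
  have hlt : s < r := by nlinarith
  have hgt : r - 1 < s := by nlinarith
  have hroot : Real.sqrt ((σ - a * r) ^ 2 + 4 * a * σ) = -2 * a * s := by
    have h : (σ - a * r) ^ 2 + 4 * a * σ = (-2 * a * s) ^ 2 := by
      rw [mul_pow, hs2, hσ]; ring
    rw [h]
    exact Real.sqrt_sq (by nlinarith)
  have hane : a ≠ 0 := ha.ne
  have hbne : b ≠ 0 := hb.ne'
  have hrne : r ≠ 0 := by linarith
  have hξ' : ξ = r * b * (s - r + 1) := by
    rw [hξ, hroot, hσ]; field_simp; ring
  have hξ0 : 0 ≤ ξ := by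
    rw [hξ']
    exact mul_nonneg (mul_nonneg (by linarith) hb.le) (by linarith)
  have hy2 : y₁ ^ 2 = r * b * (s - r + 1) := by
    rw [hy₁, Real.sq_sqrt hξ0, hξ']
  have hd : r - s ≠ 0 := by linarith
  have hD : σ * b + a * ξ = -a * r * b * (r - s) := by rw [hσ, hξ']; ring
  have hx : x₁ = y₁ / (r - s) := by
    rw [hx₁, hD, ← hy₁, hσ]; field_simp
  have hz : z₁ = r * (s - r + 1) / (r - s) := by
    rw [hz₁, hD, hσ, hξ']; field_simp
  have e1 : -σ * (x₁ - y₁) - a * y₁ * z₁ = 0 := by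
    rw [hx, hz, hσ]; field_simp; ring
  have e2 : r * x₁ - y₁ - x₁ * z₁ = 0 := by
    have h : r * x₁ - y₁ - x₁ * z₁ = y₁ * (r * (r - 1) - s ^ 2) / (r - s) ^ 2 := by
      rw [hx, hz]; field_simp; ring
    rw [h, hs2]; simp
  have e3 : -b * z₁ + x₁ * y₁ = 0 := by
    have h : -b * z₁ + x₁ * y₁ = (y₁ ^ 2 - r * b * (s - r + 1)) / (r - s) := by
      rw [hx, hz]; field_simp; ring
    rw [h, hy2]; simp
  exact ⟨⟨e1, e2, e3⟩, by linarith, by linarith, by linarith⟩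
end

section
/- Let a < 0, b > 0, r > 1, σ = −a·r, ξ = (σ·b/(2·a²))·(a·(r − 2) − σ + √((σ − a·r)² + 4·a·σ)), x₁ = σ·b·√ξ/(σ·b + a·ξ), y₁ = √ξ, z₁ = σ·ξ/(σ·b + a·ξ). Then every solution (x, y, z) ∈ ℝ³ of the system −σ(x − y) − a·y·z = 0, r·x − y − x·z = 0, −b·z + x·y = 0 equals one of the three points (0, 0, 0), (x₁, y₁, z₁), (−x₁, −y₁, z₁); i.e. the system has exactly three equilibria S₀, S₊, S₋. -/
/-- for r > 1 the system has exactly the three equilibria S₀, S₊, S₋. -/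
theorem equilibria_classification
    (a b r σ ξ x₁ y₁ z₁ : ℝ) (ha : a < 0) (hb : 0 < b) (hr : 1 < r) (hσ : σ = -a * r)
    (hξ : ξ = (σ * b / (2 * a ^ 2)) *
      (a * (r - 2) - σ + Real.sqrt ((σ - a * r) ^ 2 + 4 * a * σ)))
    (hx₁ : x₁ = σ * b * Real.sqrt ξ / (σ * b + a * ξ))
    (hy₁ : y₁ = Real.sqrt ξ)
    (hz₁ : z₁ = σ * ξ / (σ * b + a * ξ))
    (x y z : ℝ)
    (h1 : -σ * (x - y) - a * y * z = 0)
    (h2 : r * x - y - x * z = 0)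
    (h3 : -b * z + x * y = 0) :
    (x, y, z) = (0, 0, 0) ∨ (x, y, z) = (x₁, y₁, z₁) ∨ (x, y, z) = (-x₁, -y₁, z₁) := by
  subst hσ
  obtain ⟨s, hs⟩ : ∃ s, s = Real.sqrt (r ^ 2 - r) := ⟨_, rfl⟩
  have hrr : 0 < r ^ 2 - r := by nlinarith
  have hs0 : 0 < s := hs ▸ Real.sqrt_pos.mpr hrr
  have hs2 : s ^ 2 = r ^ 2 - r := by rw [hs]; exact Real.sq_sqrt hrr.le
  have hsr : 0 < r - s := by nlinarith
  have hsq : Real.sqrt ((-a * r - a * r) ^ 2 + 4 * a * (-a * r)) = -2 * a * s := by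
    rw [show (-a * r - a * r) ^ 2 + 4 * a * (-a * r) = (-2 * a * s) ^ 2 by
      linear_combination (-4 * a ^ 2) * hs2]
    exact Real.sqrt_sq (by nlinarith)
  have ha0 : a ≠ 0 := ha.ne
  have hξ' : ξ = b * s * (r - s) := by
    rw [hξ, hsq]
    field_simp
    linear_combination 2 * hs2
  have hden : -a * r * b + a * ξ = -a * r * b * (r - s) := by
    rw [hξ']
    linear_combination (-a * b) * hs2
  have hr0 : r ≠ 0 := by linarith
  have hb0 : b ≠ 0 := hb.ne'
  have hsr0 : r - s ≠ 0 := hsr.ne'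
  have hx1 : x₁ = y₁ / (r - s) := by
    rw [hx₁, hden, hy₁]
    field_simp
  have hz1 : z₁ = s := by
    rw [hz₁, hden, hξ']
    field_simp
  have e1 : r * x = y * (r + z) := by
    apply mul_left_cancel₀ ha0
    linear_combination h1
  have e2 : y = x * (r - z) := by linear_combination -h2
  have e3 : x * (z ^ 2 - s ^ 2) = 0 := by
    rw [hs2]; rw [e2] at e1; linear_combination e1
  rcases mul_eq_zero.mp e3 with hx | hz
  · left
    have hy : y = 0 := by rw [e2, hx]; ring
    have hz : z = 0 := by
      apply mul_left_cancel₀ hb0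
      rw [hx] at h3; linear_combination -h3
    rw [hx, hy, hz]
  · right
    have hz' : (z - s) * (z + s) = 0 := by linear_combination hz
    have hzs : z = s := by
      rcases mul_eq_zero.mp hz' with h | h
      · linarith
      · exfalso
        have hzz : z = -s := by linarith
        rw [e2, hzz] at h3
        have : 0 ≤ x ^ 2 * (r + s) := by positivity
        nlinarith [mul_pos hb hs0]
    subst hzs
    have hξ0 : 0 ≤ ξ := by rw [hξ']; positivity
    have hy2 : y ^ 2 = y₁ ^ 2 := by
      rw [hy₁, Real.sq_sqrt hξ0, hξ']
      linear_combination y * e2 + (r - z) * h3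
    have hxy : x = y / (r - z) := by rw [e2]; field_simp
    rcases sq_eq_sq_iff_eq_or_eq_neg.mp hy2 with h | h
    · left; rw [hxy, hx1, hz1, h]
    · right; rw [hxy, hx1, hz1, h, neg_div]
end

section
/- Let a < 0, b > 0, r > 1, σ = −a·r, ξ = (σ·b/(2·a²))·(a·(r − 2) − σ + √((σ − a·r)² + 4·a·σ)), x₁ = σ·b·√ξ/(σ·b + a·ξ), y₁ = √ξ, z₁ = σ·ξ/(σ·b + a·ξ). Then p₁ > 0 and p₃(x₁, y₁, z₁) > 0, where p₁ = b − a·r + 1 and p₃(x, y, z) = −a·(2·x·y·z + r·x² − y² + b·z² − b·r·(r − 1)). -/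
/-- p₁ > 0 and p₃(x₁, y₁, z₁) > 0. -/
theorem p1_pos_and_p3_pos
    (a b r σ ξ x₁ y₁ z₁ : ℝ) (ha : a < 0) (hb : 0 < b) (hr : 1 < r) (hσ : σ = -a * r)
    (hξ : ξ = (σ * b / (2 * a ^ 2)) *
      (a * (r - 2) - σ + Real.sqrt ((σ - a * r) ^ 2 + 4 * a * σ)))
    (hx₁ : x₁ = σ * b * Real.sqrt ξ / (σ * b + a * ξ))
    (hy₁ : y₁ = Real.sqrt ξ)
    (hz₁ : z₁ = σ * ξ / (σ * b + a * ξ)) :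
    0 < b - a * r + 1 ∧
    0 < -a * (2 * x₁ * y₁ * z₁ + r * x₁ ^ 2 - y₁ ^ 2 + b * z₁ ^ 2 - b * r * (r - 1)) := by
  have hr0 : 0 < r := by linarith
  have hrr : 0 < r * (r - 1) := mul_pos hr0 (by linarith)
  obtain ⟨s, hs0, hs⟩ : ∃ s : ℝ, 0 < s ∧ s ^ 2 = r * (r - 1) :=
    ⟨Real.sqrt (r * (r - 1)), Real.sqrt_pos.mpr hrr, Real.sq_sqrt hrr.le⟩
  have hsr : 0 < r - s := by nlinarith
  have ha0 : a ≠ 0 := ha.ne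
  have hsq : Real.sqrt ((σ - a * r) ^ 2 + 4 * a * σ) = -2 * a * s := by
    have h1 : (σ - a * r) ^ 2 + 4 * a * σ = (-2 * a * s) ^ 2 := by
      rw [hσ]; linear_combination (-4 * a ^ 2) * hs
    rw [h1, Real.sqrt_sq]
    nlinarith [mul_pos (neg_pos.mpr ha) hs0]
  have hξ' : ξ = b * s * (r - s) := by
    rw [hξ, hsq, hσ]
    field_simp
    linear_combination 2 * hs
  have hξ0 : 0 < ξ := by rw [hξ']; positivity
  have hy2 : y₁ ^ 2 = b * s * (r - s) := by rw [hy₁, Real.sq_sqrt hξ0.le, hξ']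
  have hd : σ * b + a * ξ = -a * r * b * (r - s) := by
    rw [hξ', hσ]; linear_combination (-a * b) * hs
  have hx : x₁ = y₁ / (r - s) := by
    rw [hx₁, hd, ← hy₁, hσ]
    field_simp
  have hz : z₁ = s := by
    rw [hz₁, hd, hξ', hσ]
    field_simp
  have hxy : x₁ * y₁ = b * s := by
    rw [hx, div_mul_eq_mul_div, ← sq, hy2]
    field_simp
  have hx2 : r * x₁ ^ 2 = b * s * (r + s) := by
    rw [hx, div_pow, hy2]
    field_simp
    linear_combination hs
  constructor
  · nlinarith [mul_pos (neg_pos.mpr ha) hr0]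
  · have h : -a * (2 * x₁ * y₁ * z₁ + r * x₁ ^ 2 - y₁ ^ 2 + b * z₁ ^ 2 - b * r * (r - 1))
        = -a * (4 * b * s ^ 2) := by
      rw [hz, hx2, hy2]
      linear_combination (-a * 2 * s) * hxy + (-a * b) * hs
    rw [h]
    have := neg_pos.mpr ha
    positivity
end

section
/- Let a < 0, b > 0, r > 1, σ = −a·r, ξ = (σ·b/(2·a²))·(a·(r − 2) − σ + √((σ − a·r)² + 4·a·σ)), x₁ = σ·b·√ξ/(σ·b + a·ξ), y₁ = √ξ, z₁ = σ·ξ/(σ·b + a·ξ). If a·r + 1 ≥ 0, then p₁·p₂(x₁, y₁, z₁) − p₃(x₁, y₁, z₁) > 0, where p₁ = b − a·r + 1, p₂(x, y, z) = x² + a·y² − a·z² − a·r·(b − r + 1) + b, p₃(x, y, z) = −a·(2·x·y·z + r·x² − y² + b·z² − b·r·(r − 1)). -/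
/-- if a·r + 1 ≥ 0 then p₁·p₂ − p₃ > 0 at S₊. -/
theorem hurwitz_minor_pos_of_ar_add_one_nonneg
    (a b r σ ξ x₁ y₁ z₁ : ℝ) (ha : a < 0) (hb : 0 < b) (hr : 1 < r) (hσ : σ = -a * r)
    (hξ : ξ = (σ * b / (2 * a ^ 2)) *
      (a * (r - 2) - σ + Real.sqrt ((σ - a * r) ^ 2 + 4 * a * σ)))
    (hx₁ : x₁ = σ * b * Real.sqrt ξ / (σ * b + a * ξ))
    (hy₁ : y₁ = Real.sqrt ξ)
    (hz₁ : z₁ = σ * ξ / (σ * b + a * ξ))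
    (har : 0 ≤ a * r + 1) :
    0 < (b - a * r + 1) *
        (x₁ ^ 2 + a * y₁ ^ 2 - a * z₁ ^ 2 - a * r * (b - r + 1) + b) -
        (-a * (2 * x₁ * y₁ * z₁ + r * x₁ ^ 2 - y₁ ^ 2 + b * z₁ ^ 2 - b * r * (r - 1))) := by
  obtain ⟨s, hs⟩ : ∃ s, s = Real.sqrt (r ^ 2 - r) := ⟨_, rfl⟩
  have hrr : 0 < r ^ 2 - r := by nlinarith
  have hs0 : 0 < s := by rw [hs]; exact Real.sqrt_pos.mpr hrr
  have hs2 : s ^ 2 = r ^ 2 - r := by rw [hs]; exact Real.sq_sqrt hrr.le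
  have hsr : s < r := by nlinarith
  have hsr1 : r - 1 < s := by nlinarith
  have hsq : Real.sqrt ((σ - a * r) ^ 2 + 4 * a * σ) = -2 * a * s := by
    have h : (σ - a * r) ^ 2 + 4 * a * σ = (-2 * a * s) ^ 2 := by
      rw [hσ]; linear_combination (-4 * a ^ 2) * hs2
    rw [h]
    exact Real.sqrt_sq (by nlinarith)
  have ha0 : a ≠ 0 := ha.ne
  have hr0 : 0 < r := by linarith
  have hξ' : ξ = r * b * (s - r + 1) := by
    rw [hξ, hsq, hσ]; field_simp; ring
  have hξ0 : 0 < ξ := by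
    rw [hξ']; exact mul_pos (mul_pos hr0 hb) (by linarith)
  have hy2 : y₁ ^ 2 = r * b * (s - r + 1) := by
    rw [hy₁, Real.sq_sqrt hξ0.le, hξ']
  have hd : σ * b + a * ξ = -a * r * b * (r - s) := by
    rw [hσ, hξ']; ring
  have hd0 : -a * r * b * (r - s) ≠ 0 := by
    have : r - s ≠ 0 := by linarith
    have := hb.ne'
    have := hr0.ne'
    simp_all
  have hz : z₁ = s := by
    rw [hz₁, hd, div_eq_iff hd0, hσ, hξ']
    linear_combination (-a * r * b) * hs2
  have hx : r * x₁ = y₁ * (r + s) := by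
    rw [hx₁, ← hy₁, hd, mul_div_assoc', div_eq_iff hd0, hσ]
    linear_combination (-a * r * b * y₁) * hs2
  have hxy : x₁ * y₁ = b * s := by
    apply mul_left_cancel₀ hr0.ne'
    linear_combination y₁ * hx + (r + s) * hy2 + r * b * hs2
  have hx2 : x₁ ^ 2 = b * (r - 1 + s) := by
    apply mul_left_cancel₀ hr0.ne'
    linear_combination x₁ * hx + (r + s) * hxy + b * hs2
  have key : (b - a * r + 1) *
        (x₁ ^ 2 + a * y₁ ^ 2 - a * z₁ ^ 2 - a * r * (b - r + 1) + b) -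
        (-a * (2 * x₁ * y₁ * z₁ + r * x₁ ^ 2 - y₁ ^ 2 + b * z₁ ^ 2 - b * r * (r - 1)))
      = b * ((b - a * r + 1) * (r + s + (-a * r) * (r - s)) - 4 * (-a * r) * (r - 1)) := by
    have h3 : 2 * x₁ * y₁ * z₁ = 2 * b * s ^ 2 := by
      rw [hz]; linear_combination 2 * s * hxy
    rw [h3, hx2, hy2, hz, hs2]; ring
  rw [key]
  apply mul_pos hb
  obtain ⟨t, ht⟩ : ∃ t, t = -a * r := ⟨_, rfl⟩
  have ht0 : 0 < t := by rw [ht]; exact mul_pos (by linarith) hr0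
  have ht1 : t ≤ 1 := by rw [ht]; linarith
  have e : b - a * r + 1 = b + t + 1 := by rw [ht]; ring
  rw [e, ← ht]
  have hq : 2 * (r - 1) < r + s + t * (r - s) := by
    have := mul_pos ht0 (sub_pos.mpr hsr)
    linarith
  have h1 : 2 * t * (2 * (r - 1)) < (b + t + 1) * (r + s + t * (r - s)) :=
    mul_lt_mul'' (by linarith) hq (by linarith) (by linarith)
  linarith
end

section
/- Let a < 0, b > 0, r > 1, σ = −a·r, ξ = (σ·b/(2·a²))·(a·(r − 2) − σ + √((σ − a·r)² + 4·a·σ)), x₁ = σ·b·√ξ/(σ·b + a·ξ), y₁ = √ξ, z₁ = σ·ξ/(σ·b + a·ξ). If 0 ≤ a·r + 1 and a·r + 1 < 2·r/(r − √(r·(r − 1))), then p₂(x₁, y₁, z₁) > 0, where p₂(x, y, z) = x² + a·y² − a·z² − a·r·(b − r + 1) + b. -/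
/-- condition (i) implies p₂(x₁, y₁, z₁) > 0. -/
theorem p2_pos_of_cond_i
    (a b r σ ξ x₁ y₁ z₁ : ℝ) (ha : a < 0) (hb : 0 < b) (hr : 1 < r) (hσ : σ = -a * r)
    (hξ : ξ = (σ * b / (2 * a ^ 2)) *
      (a * (r - 2) - σ + Real.sqrt ((σ - a * r) ^ 2 + 4 * a * σ)))
    (hx₁ : x₁ = σ * b * Real.sqrt ξ / (σ * b + a * ξ))
    (hy₁ : y₁ = Real.sqrt ξ)
    (hz₁ : z₁ = σ * ξ / (σ * b + a * ξ))
    (har0 : 0 ≤ a * r + 1)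
    (har1 : a * r + 1 < 2 * r / (r - Real.sqrt (r * (r - 1)))) :
    0 < x₁ ^ 2 + a * y₁ ^ 2 - a * z₁ ^ 2 - a * r * (b - r + 1) + b := by
  obtain ⟨s, hs⟩ : ∃ s, s = Real.sqrt (r * (r - 1)) := ⟨_, rfl⟩
  have hrr : 0 < r * (r - 1) := mul_pos (by linarith) (by linarith)
  have hs0 : 0 < s := by rw [hs]; exact Real.sqrt_pos.mpr hrr
  have hs2 : s ^ 2 = r * (r - 1) := by rw [hs]; exact Real.sq_sqrt hrr.le
  have hd : 0 < r - s := by nlinarith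
  have hS : Real.sqrt ((σ - a * r) ^ 2 + 4 * a * σ) = -2 * a * s := by
    rw [show (σ - a * r) ^ 2 + 4 * a * σ = (-2 * a * s) ^ 2 by
      rw [hσ]; linear_combination (-4 * a ^ 2) * hs2]
    exact Real.sqrt_sq (by nlinarith)
  have hane : a ≠ 0 := ha.ne
  have hξ' : ξ = b * s * (r - s) := by
    rw [hξ, hS, hσ]
    field_simp
    linear_combination 2 * hs2
  have hξ0 : 0 ≤ ξ := by rw [hξ']; positivity
  have hr0 : r ≠ 0 := by linarith
  have hD : σ * b + a * ξ = -a * r * b * (r - s) := by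
    rw [hσ, hξ']; linear_combination (-a * b) * hs2
  have hx : x₁ ^ 2 = b * s / (r - s) := by
    rw [hx₁, hD, div_pow, mul_pow, Real.sq_sqrt hξ0, hξ', hσ]
    field_simp
  have hz : z₁ = s := by
    rw [hz₁, hD, hξ', hσ]
    field_simp
  have hy : y₁ ^ 2 = b * s * (r - s) := by
    rw [hy₁, Real.sq_sqrt hξ0, hξ']
  have h1 : 0 < b * s / (r - s) := by positivity
  have h2 : 0 < (-a) * r * b * (r - s) := by
    have : 0 < -a := by linarith
    have : 0 < r := by linarith
    positivity
  rw [hx, hz, hy]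
  have key : b * s / (r - s) + a * (b * s * (r - s)) - a * s ^ 2 - a * r * (b - r + 1) + b
      = b * s / (r - s) + (-a) * r * b * (r - s) + b := by
    linear_combination (-a - a * b) * hs2
  rw [key]; linarith
end

section
/- Let a < 0, b > 0, r > 1, σ = −a·r, ξ = (σ·b/(2·a²))·(a·(r − 2) − σ + √((σ − a·r)² + 4·a·σ)), x₁ = σ·b·√ξ/(σ·b + a·ξ), y₁ = √ξ, z₁ = σ·ξ/(σ·b + a·ξ). If a·r + 1 < 0, then p₂(x₁, y₁, z₁) > 0, where p₂(x, y, z) = x² + a·y² − a·z² − a·r·(b − r + 1) + b. -/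
/-- if a·r + 1 < 0 then p₂(x₁, y₁, z₁) > 0. -/
theorem p2_pos_of_ar_add_one_neg
    (a b r σ ξ x₁ y₁ z₁ : ℝ) (ha : a < 0) (hb : 0 < b) (hr : 1 < r) (hσ : σ = -a * r)
    (hξ : ξ = (σ * b / (2 * a ^ 2)) *
      (a * (r - 2) - σ + Real.sqrt ((σ - a * r) ^ 2 + 4 * a * σ)))
    (hx₁ : x₁ = σ * b * Real.sqrt ξ / (σ * b + a * ξ))
    (hy₁ : y₁ = Real.sqrt ξ)
    (hz₁ : z₁ = σ * ξ / (σ * b + a * ξ))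
    (har : a * r + 1 < 0) :
    0 < x₁ ^ 2 + a * y₁ ^ 2 - a * z₁ ^ 2 - a * r * (b - r + 1) + b := by
  have hrr : 0 < r * (r - 1) := mul_pos (by linarith) (by linarith)
  obtain ⟨s, hs⟩ : ∃ s, s = Real.sqrt (r * (r - 1)) := ⟨_, rfl⟩
  have hs0 : 0 < s := hs ▸ Real.sqrt_pos.mpr hrr
  have hs2 : s ^ 2 = r * (r - 1) := by rw [hs]; exact Real.sq_sqrt hrr.le
  have hsr : s < r := by nlinarith
  have hsr' : r - 1 < s := by nlinarith
  have hsq : Real.sqrt ((σ - a * r) ^ 2 + 4 * a * σ) = -2 * a * s := by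
    have h : (σ - a * r) ^ 2 + 4 * a * σ = (-2 * a * s) ^ 2 := by
      rw [mul_pow, hs2, hσ]; ring
    rw [h]
    exact Real.sqrt_sq (by nlinarith)
  have hane : a ≠ 0 := ha.ne
  have hξ' : ξ = r * b * (s - r + 1) := by
    rw [hξ, hsq, hσ]; field_simp; ring
  have hξ0 : 0 ≤ ξ := by
    rw [hξ']
    exact mul_nonneg (mul_nonneg (by linarith) hb.le) (by linarith)
  have hden : σ * b + a * ξ = σ * b * (r - s) := by
    rw [hξ', hσ]; ring
  have hσ0 : 0 < σ := by rw [hσ]; nlinarith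
  have hd : 0 < r - s := by linarith
  have hz : z₁ = s := by
    rw [hz₁, hden, hξ', div_eq_iff (by positivity)]
    linear_combination σ * b * hs2
  have hx : x₁ ^ 2 = b * (s + r - 1) := by
    have h : x₁ = Real.sqrt ξ / (r - s) := by
      rw [hx₁, hden]; field_simp
    rw [h, div_pow, Real.sq_sqrt hξ0, hξ', div_eq_iff (by positivity)]
    linear_combination b * (r + 1 - s) * hs2
  have hy : y₁ ^ 2 = ξ := by rw [hy₁]; exact Real.sq_sqrt hξ0
  have key : x₁ ^ 2 + a * y₁ ^ 2 - a * z₁ ^ 2 - a * r * (b - r + 1) + b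
      = b * (s + r) + -a * r * b * (r - s) := by
    rw [hx, hy, hz, hs2, hξ']; ring
  rw [key]
  have h1 : 0 < b * (s + r) := mul_pos hb (by linarith)
  have h2 : 0 < -a * r * b * (r - s) := by
    rw [← hσ]; positivity
  linarith
end

section
/- Let a < 0, b > 0, r > 1, σ = −a·r, ξ = (σ·b/(2·a²))·(a·(r − 2) − σ + √((σ − a·r)² + 4·a·σ)), x₁ = σ·b·√ξ/(σ·b + a·ξ), y₁ = √ξ, z₁ = σ·ξ/(σ·b + a·ξ). If a·r + 1 < 0 and b > b_cr, where b_cr = (4·a·(r − 1)·(a·r + 1)·√(r·(r − 1)) + (a·r − 1)³)/((a·r + 1)² − 4·a·r²), then p₁·p₂(x₁, y₁, z₁) − p₃(x₁, y₁, z₁) > 0, where p₁ = b − a·r + 1, p₂(x, y, z) = x² + a·y² − a·z² − a·r·(b − r + 1) + b, p₃(x, y, z) = −a·(2·x·y·z + r·x² − y² + b·z² − b·r·(r − 1)). -/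
/-- condition (ii) implies p₁·p₂ − p₃ > 0 at S₊. -/
theorem hurwitz_minor_pos_of_cond_ii
    (a b r σ ξ x₁ y₁ z₁ : ℝ) (ha : a < 0) (hb : 0 < b) (hr : 1 < r) (hσ : σ = -a * r)
    (hξ : ξ = (σ * b / (2 * a ^ 2)) *
      (a * (r - 2) - σ + Real.sqrt ((σ - a * r) ^ 2 + 4 * a * σ)))
    (hx₁ : x₁ = σ * b * Real.sqrt ξ / (σ * b + a * ξ))
    (hy₁ : y₁ = Real.sqrt ξ)
    (hz₁ : z₁ = σ * ξ / (σ * b + a * ξ))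
    (har : a * r + 1 < 0)
    (hbcr : b > (4 * a * (r - 1) * (a * r + 1) * Real.sqrt (r * (r - 1)) + (a * r - 1) ^ 3) /
        ((a * r + 1) ^ 2 - 4 * a * r ^ 2)) :
    0 < (b - a * r + 1) *
        (x₁ ^ 2 + a * y₁ ^ 2 - a * z₁ ^ 2 - a * r * (b - r + 1) + b) -
        (-a * (2 * x₁ * y₁ * z₁ + r * x₁ ^ 2 - y₁ ^ 2 + b * z₁ ^ 2 - b * r * (r - 1))) := by
  have hr0 : 0 < r := by linarith
  have hrr : 0 < r * (r - 1) := mul_pos hr0 (by linarith)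
  obtain ⟨s, hs⟩ : ∃ s, s = Real.sqrt (r * (r - 1)) := ⟨_, rfl⟩
  have hs0 : 0 < s := by rw [hs]; exact Real.sqrt_pos.mpr hrr
  have hs2 : s ^ 2 = r * (r - 1) := by rw [hs]; exact Real.sq_sqrt hrr.le
  rw [← hs] at hbcr
  have hsr : s < r := by nlinarith
  have hrs : 0 < r - s := by linarith
  have hroot : Real.sqrt ((σ - a * r) ^ 2 + 4 * a * σ) = -2 * a * s := by
    have h1 : (σ - a * r) ^ 2 + 4 * a * σ = (-2 * a * s) ^ 2 := by
      rw [hσ]; linear_combination (-4 * a ^ 2) * hs2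
    rw [h1]
    exact Real.sqrt_sq (by nlinarith)
  have ha0 : a ≠ 0 := ha.ne
  have hξ2 : ξ = b * s * (r - s) := by
    rw [hξ, hroot, hσ]
    field_simp
    linear_combination 2 * hs2
  have hξ0 : 0 ≤ ξ := by rw [hξ2]; positivity
  have hden : σ * b + a * ξ = -a * r * b * (r - s) := by
    rw [hσ, hξ2]; linear_combination (-a * b) * hs2
  have hdn : -a * r * b * (r - s) ≠ 0 :=
    (mul_pos (mul_pos (mul_pos (by linarith) hr0) hb) hrs).ne'
  have hz : z₁ = s := by
    rw [hz₁, hden, div_eq_iff hdn, hσ, hξ2]; ring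
  have hy2 : y₁ ^ 2 = b * s * (r - s) := by
    rw [hy₁, Real.sq_sqrt hξ0, hξ2]
  have hxy0 : x₁ * (r - s) = y₁ := by
    rw [hx₁, hden, hy₁, hσ]
    field_simp
  have hxr : x₁ * r = y₁ * (r + s) := by
    rw [← hxy0]; linear_combination x₁ * hs2
  have hxy : x₁ * y₁ = b * s := by
    apply mul_right_cancel₀ hrs.ne'
    linear_combination y₁ * hxy0 + hy2
  have hx2 : x₁ ^ 2 = b * (s + r - 1) := by
    apply mul_right_cancel₀ hr0.ne'
    linear_combination x₁ * hxr + (r + s) * hxy + b * hs2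
  have hD : 0 < (a * r + 1) ^ 2 - 4 * a * r ^ 2 := by
    have := mul_pos (neg_pos.mpr ha) (pow_pos hr0 2)
    nlinarith [sq_nonneg (a * r + 1)]
  rw [gt_iff_lt, div_lt_iff₀ hD] at hbcr
  have hC : 0 < r * (1 - a * r) - s * (1 + a * r) := by
    have h1 : 0 < r * (1 - a * r) := mul_pos hr0 (by linarith)
    have h2 : 0 < s * (-(1 + a * r)) := mul_pos hs0 (by linarith)
    linarith
  have hE : 0 < (b + 1 - a * r) * (s * (1 + a * r) + r * (1 - a * r)) + 4 * a * r * (r - 1) := by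
    apply pos_of_mul_pos_left _ hC.le
    have h3 := mul_pos hr0 (sub_pos.mpr hbcr)
    refine lt_of_lt_of_eq h3 ?_
    linear_combination ((b + 1 - a * r) * (1 + a * r) ^ 2) * hs2
  refine lt_of_lt_of_eq (mul_pos hb hE) ?_
  have e1 : 2 * x₁ * y₁ * z₁ = 2 * b * s ^ 2 := by
    rw [hz]; linear_combination 2 * s * hxy
  rw [e1, hz, hx2, hy2]
  ring_nf
  have hs3 : s ^ 2 = r ^ 2 - r := by rw [hs2]; ring
  try rw [hs3]
  try ring
end

section
/- (Lemma on stability, case (i)) Let a < 0, b > 0, r > 1, σ = −a·r, ξ = (σ·b/(2·a²))·(a·(r − 2) − σ + √((σ − a·r)² + 4·a·σ)), x₁ = σ·b·√ξ/(σ·b + a·ξ), y₁ = √ξ, z₁ = σ·ξ/(σ·b + a·ξ). If 0 ≤ a·r + 1 < 2·r/(r − √(r·(r − 1))), then every complex root λ of the cubic polynomial λ³ + p₁·λ² + p₂(x₁, y₁, z₁)·λ + p₃(x₁, y₁, z₁) has negative real part (i.e. the equilibria S₊ = (x₁, y₁, z₁) and S₋ = (−x₁, −y₁, z₁) are linearly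 asymptotically stable), where p₁ = b − a·r + 1, p₂(x, y, z) = x² + a·y² − a·z² − a·r·(b − r + 1) + b, p₃(x, y, z) = −a·(2·x·y·z + r·x² − y² + b·z² − b·r·(r − 1)). -/
theorem routh_hurwitz_cubic (p q c : ℝ) (hp : 0 < p) (hq : 0 < q) (hc : 0 < c) (h : c < p * q)
    (lam : ℂ) (hl : lam ^ 3 + (p : ℂ) * lam ^ 2 + (q : ℂ) * lam + (c : ℂ) = 0) : lam.re < 0 := by
  obtain ⟨u, v⟩ := lam
  have h1 := congrArg Complex.re hl
  have h2 := congrArg Complex.im hl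
  simp [pow_succ] at h1 h2
  show u < 0
  by_contra! hu
  have h2' : v * (3 * u ^ 2 - v ^ 2 + 2 * p * u + q) = 0 := by linear_combination h2
  rcases mul_eq_zero.mp h2' with hv | hv
  · subst hv
    have : 0 < u ^ 3 + p * u ^ 2 + q * u + c := by positivity
    nlinarith
  · have e : 8 * u ^ 3 + 8 * p * u ^ 2 + 2 * (p ^ 2 + q) * u + (p * q - c) = 0 := by
      linear_combination (-1) * h1 + (3 * u + p) * hv
    have : 0 ≤ 8 * u ^ 3 + 8 * p * u ^ 2 + 2 * (p ^ 2 + q) * u := by positivity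
    linarith

/-- Lemma on stability, case (i): under condition (i), every complex root
of the characteristic polynomial at S₊ (which coincides with the one at S₋) has
negative real part. -/
theorem stability_case_i
    (a b r σ ξ x₁ y₁ z₁ : ℝ) (ha : a < 0) (hb : 0 < b) (hr : 1 < r) (hσ : σ = -a * r)
    (hξ : ξ = (σ * b / (2 * a ^ 2)) *
      (a * (r - 2) - σ + Real.sqrt ((σ - a * r) ^ 2 + 4 * a * σ)))
    (hx₁ : x₁ = σ * b * Real.sqrt ξ / (σ * b + a * ξ))
    (hy₁ : y₁ = Real.sqrt ξ)
    (hz₁ : z₁ = σ * ξ / (σ * b + a * ξ))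
    (har0 : 0 ≤ a * r + 1)
    (har1 : a * r + 1 < 2 * r / (r - Real.sqrt (r * (r - 1)))) :
    ∀ lam : ℂ,
      lam ^ 3 + ((b - a * r + 1 : ℝ) : ℂ) * lam ^ 2 +
        ((x₁ ^ 2 + a * y₁ ^ 2 - a * z₁ ^ 2 - a * r * (b - r + 1) + b : ℝ) : ℂ) * lam +
        ((-a * (2 * x₁ * y₁ * z₁ + r * x₁ ^ 2 - y₁ ^ 2 + b * z₁ ^ 2 - b * r * (r - 1)) : ℝ) : ℂ)
        = 0 → lam.re < 0 := by
  clear har1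
  obtain ⟨s, hs⟩ : ∃ s, s = Real.sqrt (r * (r - 1)) := ⟨_, rfl⟩
  have hrr : 0 < r * (r - 1) := mul_pos (by linarith) (by linarith)
  have hs0 : 0 < s := hs ▸ Real.sqrt_pos.mpr hrr
  have hs2 : s ^ 2 = r * (r - 1) := by rw [hs]; exact Real.sq_sqrt hrr.le
  have hsr : s < r := by nlinarith
  have hsr1 : r - 1 < s := by nlinarith
  have hroot : Real.sqrt ((σ - a * r) ^ 2 + 4 * a * σ) = -2 * a * s := by
    rw [show (σ - a * r) ^ 2 + 4 * a * σ = (-2 * a * s) ^ 2 by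
      subst hσ; linear_combination (-4 * a ^ 2) * hs2]
    exact Real.sqrt_sq (by nlinarith)
  have hane : a ≠ 0 := ha.ne
  have hrs : r - s ≠ 0 := by linarith
  have hr0 : r ≠ 0 := by linarith
  have hξ' : ξ = b * s * (r - s) := by
    rw [hξ, hroot, hσ]
    field_simp
    linear_combination 2 * hs2
  have hξ0 : 0 ≤ ξ := by
    rw [hξ']; exact mul_nonneg (mul_nonneg hb.le hs0.le) (by linarith)
  have hD : σ * b + a * ξ = -a * r * b * (r - s) := by
    rw [hξ', hσ]; linear_combination (-a * b) * hs2
  have hy2 : y₁ ^ 2 = b * s * (r - s) := by rw [hy₁, Real.sq_sqrt hξ0, hξ']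
  have hx : x₁ = y₁ / (r - s) := by
    rw [hx₁, hD, ← hy₁, hσ]; field_simp
  have hz : z₁ = s := by
    rw [hz₁, hD, hξ', hσ]; field_simp
  have hxy : x₁ * y₁ = b * s := by
    rw [hx, div_mul_eq_mul_div, ← pow_two, hy2]; field_simp
  have hx2 : x₁ ^ 2 = b * s + b * (r - 1) := by
    rw [hx, div_pow, hy2]; field_simp; linear_combination hs2
  have e2 : x₁ ^ 2 + a * y₁ ^ 2 - a * z₁ ^ 2 - a * r * (b - r + 1) + b
      = b * ((s + r) - a * r * (r - s)) := by
    rw [hx2, hy2, hz]; linear_combination (-a * b - a) * hs2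
  have e3 : -a * (2 * x₁ * y₁ * z₁ + r * x₁ ^ 2 - y₁ ^ 2 + b * z₁ ^ 2 - b * r * (r - 1))
      = b * (4 * (-a * r) * (r - 1)) := by
    rw [show 2 * x₁ * y₁ * z₁ = 2 * (x₁ * y₁) * z₁ by ring, hxy, hx2, hy2, hz]
    linear_combination (-4 * a * b) * hs2
  rw [e2, e3]
  intro lam
  have hA : 0 < -a * r := mul_pos (by linarith) (by linarith)
  obtain ⟨A, hAd⟩ : ∃ A, A = -a * r := ⟨_, rfl⟩
  rw [show b - a * r + 1 = b + A + 1 by rw [hAd]; ring,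
    show b * ((s + r) - a * r * (r - s)) = b * ((s + r) + A * (r - s)) by rw [hAd]; ring, ← hAd]
  rw [← hAd] at hA
  have hA1 : A ≤ 1 := by rw [hAd]; linarith
  have hAs : 0 < A * (r - s) := mul_pos hA (by linarith)
  have hr1 : 0 < r - 1 := by linarith
  apply routh_hurwitz_cubic
  · linarith
  · exact mul_pos hb (by linarith)
  · positivity
  · have k1 : 2 * A * (2 * (r - 1)) < (b + A + 1) * ((s + r) + A * (r - s)) :=
      mul_lt_mul'' (by linarith) (by linarith) (by linarith) (by linarith)
    nlinarith [mul_lt_mul_of_pos_left k1 hb]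
end

section
/- Let a < 0, b > 0, 0 < r < 1 and σ = −a·r. Then every complex root λ of the cubic polynomial λ³ + p₁·λ² + p₂(0,0,0)·λ + p₃(0,0,0), i.e. the characteristic polynomial of the Jacobian of the generalized Lorenz system at the zero equilibrium S₀ = (0,0,0), has negative real part, where p₁ = b − a·r + 1, p₂(0,0,0) = −a·r·(b − r + 1) + b, p₃(0,0,0) = a·b·r·(r − 1). -/
/-- for 0 < r < 1 every complex root of the characteristic polynomial
at S₀ has negative real part. -/
theorem S0_stable_of_r_lt_one
    (a b r σ : ℝ) (ha : a < 0) (hb : 0 < b) (hr0 : 0 < r) (hr1 : r < 1) (hσ : σ = -a * r) :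
    ∀ lam : ℂ,
      lam ^ 3 + ((b - a * r + 1 : ℝ) : ℂ) * lam ^ 2 +
        ((-a * r * (b - r + 1) + b : ℝ) : ℂ) * lam +
        ((a * b * r * (r - 1) : ℝ) : ℂ) = 0 → lam.re < 0 := by
  intro lam h
  have hs : 0 < σ := by rw [hσ]; exact mul_pos (by linarith) hr0
  have hq : 0 < σ * (1 - r) := mul_pos hs (by linarith)
  have hf : (lam + (b : ℂ)) *
      (lam * lam + ((1 + σ : ℝ) : ℂ) * lam + ((σ * (1 - r) : ℝ) : ℂ)) = 0 := by
    rw [← h, hσ]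
    push_cast
    ring
  rcases mul_eq_zero.mp hf with h1 | h1
  · have h2 := congrArg Complex.re h1
    simp only [Complex.add_re, Complex.ofReal_re, Complex.zero_re] at h2
    linarith
  · have h2 := congrArg Complex.re h1
    have h3 := congrArg Complex.im h1
    simp only [Complex.add_re, Complex.add_im, Complex.mul_re, Complex.mul_im,
      Complex.ofReal_re, Complex.ofReal_im, Complex.zero_re, Complex.zero_im] at h2 h3
    by_contra hx
    push Not at hx
    have h4 : lam.im * (2 * lam.re + (1 + σ)) = 0 := by linarith
    rcases mul_eq_zero.mp h4 with h5 | h5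
    · rw [h5] at h2
      have := mul_nonneg hx hx
      have := mul_nonneg (by linarith : 0 ≤ 1 + σ) hx
      linarith
    · linarith
end

section
/- Let a < 0, b > 0, r > 0, σ = −a·r, and let δ > 0 satisfy a + δ > 0. Set k = (σ + δ·r)/(a + δ) and V(x, y, z) = x² + δ·y² + (a + δ)·(z − k)². Then for every (x, y, z) ∈ ℝ³ the derivative of V along the generalized Lorenz vector field satisfies the identity ∇V(x, y, z) · f(x, y, z) = −2·σ·x² − 2·δ·y² − 2·(a + δ)·b·z² + 2·(σ + δ·r)·b·z, where f(x, y, z) = (−σ(x − y) − a·y·z, r·x − y − x·z, −b·z + x·y). -/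
/-- the derivative of the Lyapunov function V along the generalized
Lorenz vector field. -/
theorem lyapunov_derivative_along_field
    (a b r σ δ : ℝ) (ha : a < 0) (hb : 0 < b) (hr : 0 < r) (hσ : σ = -a * r)
    (hδ : 0 < δ) (haδ : 0 < a + δ)
    (k : ℝ) (hk : k = (σ + δ * r) / (a + δ))
    (V : ℝ × ℝ × ℝ → ℝ)
    (hV : V = fun p => p.1 ^ 2 + δ * p.2.1 ^ 2 + (a + δ) * (p.2.2 - k) ^ 2)
    (f : ℝ × ℝ × ℝ → ℝ × ℝ × ℝ)
    (hf : f = fun p => (-σ * (p.1 - p.2.1) - a * p.2.1 * p.2.2,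
                        r * p.1 - p.2.1 - p.1 * p.2.2,
                        -b * p.2.2 + p.1 * p.2.1)) :
    ∀ p : ℝ × ℝ × ℝ,
      fderiv ℝ V p (f p) =
        -2 * σ * p.1 ^ 2 - 2 * δ * p.2.1 ^ 2 - 2 * (a + δ) * b * p.2.2 ^ 2 +
          2 * (σ + δ * r) * b * p.2.2 := by
  intro p
  have hk' : (a + δ) * k = σ + δ * r := by
    rw [hk]; field_simp
  have h1 : HasFDerivAt (fun p : ℝ × ℝ × ℝ => p.1) (ContinuousLinearMap.fst ℝ ℝ (ℝ × ℝ)) p :=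
    hasFDerivAt_fst
  have h2 : HasFDerivAt (fun p : ℝ × ℝ × ℝ => p.2)
      (ContinuousLinearMap.snd ℝ ℝ (ℝ × ℝ)) p := hasFDerivAt_snd
  have h := ((h1.pow 2).add ((h2.fst.pow 2).const_mul δ)).add
    (((h2.snd.sub_const k).pow 2).const_mul (a + δ))
  rw [hf, hV]
  erw [h.fderiv]
  simp
  linear_combination (2 * b * p.2.2 - 2 * p.1 * p.2.1) * hk'
end

section
/- (Perpetual point equations) Let a < 0, b > 0, r > 0, σ = −a·r, and let f(x, y, z) = (−σ(x − y) − a·y·z, r·x − y − x·z, −b·z + x·y) be the generalized Lorenz vector field with Jacobian matrix J(x, y, z). Suppose (x, y, z) ∈ ℝ³ is a perpetual point, i.e. J(x, y, z)·f(x, y, z) = 0 while f(x, y, z) ≠ 0, and suppose x² + a·y² − b² ≠ 0. Then the following three equations hold: (x² − a·z² + a·r² − 1)·(−y² + z² + r²·(a − 1)) = r²·(a·r − 1)² − z²·(a·r − b − 1)²; 2·x·y·z + r·x² − y² + b·z² − b·r·(r − 1) = 0; and z = (r·x² + (a·r − b − 1)·x·y − a·r·y²)/(x² + a·y² − b²).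 -/
/-- equations satisfied by perpetual points of the Rabinovich system. -/
theorem perpetual_point_equations
    (a b r σ : ℝ) (ha : a < 0) (hb : 0 < b) (hr : 0 < r) (hσ : σ = -a * r)
    (x y z : ℝ)
    (J : Matrix (Fin 3) (Fin 3) ℝ)
    (hJ : J = !![-σ, σ - a * z, -a * y; r - z, -1, -x; y, x, -b])
    (f : Fin 3 → ℝ)
    (hf : f = ![-σ * (x - y) - a * y * z, r * x - y - x * z, -b * z + x * y])
    (hpp : J.mulVec f = 0) (hf0 : f ≠ 0)
    (hden : x ^ 2 + a * y ^ 2 - b ^ 2 ≠ 0) :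
    (x ^ 2 - a * z ^ 2 + a * r ^ 2 - 1) * (-y ^ 2 + z ^ 2 + r ^ 2 * (a - 1)) =
        r ^ 2 * (a * r - 1) ^ 2 - z ^ 2 * (a * r - b - 1) ^ 2 ∧
    2 * x * y * z + r * x ^ 2 - y ^ 2 + b * z ^ 2 - b * r * (r - 1) = 0 ∧
    z = (r * x ^ 2 + (a * r - b - 1) * x * y - a * r * y ^ 2) /
        (x ^ 2 + a * y ^ 2 - b ^ 2) := by
  have hdet : J.det = 0 := Matrix.exists_mulVec_eq_zero_iff.mp ⟨f, hf0, hpp⟩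
  have g1 := congrFun hpp 0
  have g2 := congrFun hpp 1
  have g3 := congrFun hpp 2
  subst hσ
  simp [hJ, hf, Matrix.mulVec, dotProduct, Fin.sum_univ_three] at g1 g2 g3
  rw [hJ, Matrix.det_fin_three] at hdet
  simp at hdet
  have ha0 : a ≠ 0 := ha.ne
  have hz : z * (x ^ 2 + a * y ^ 2 - b ^ 2) =
      r * x ^ 2 + (a * r - b - 1) * x * y - a * r * y ^ 2 := by
    linear_combination -g3
  have G1 : x * (-y ^ 2 + z ^ 2 + r ^ 2 * (a - 1)) =
      y * (r * (a * r - 1) + z * (a * r - b - 1)) := by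
    apply mul_left_cancel₀ ha0
    linear_combination g1
  have G2 : x * (r * (a * r - 1) - z * (a * r - b - 1)) =
      y * (x ^ 2 - a * z ^ 2 + a * r ^ 2 - 1) := by
    linear_combination g2
  refine ⟨?_, ?_, ?_⟩
  · by_cases hx : x = 0
    · by_cases hy : y = 0
      · exfalso
        subst hx hy
        have hz0 : z = 0 := by
          have : z * b ^ 2 = 0 := by linear_combination -hz
          rcases mul_eq_zero.mp this with h | h
          · exact h
          · exact absurd h (by positivity)
        subst hz0
        apply hf0
        rw [hf]
        ext i
        fin_cases i <;> simp
      · apply mul_left_cancel₀ hy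
        linear_combination (-(-y ^ 2 + z ^ 2 + r ^ 2 * (a - 1))) * G2 +
          (r * (a * r - 1) - z * (a * r - b - 1)) * G1
    · apply mul_left_cancel₀ hx
      linear_combination (x ^ 2 - a * z ^ 2 + a * r ^ 2 - 1) * G1 -
        (r * (a * r - 1) + z * (a * r - b - 1)) * G2
  · apply mul_left_cancel₀ ha0
    linear_combination hdet
  · rw [eq_div_iff hden]
    exact hz
end
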